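/- arXiv:1410.3253 — 3 statements merged into one kernel-verified Lean document; each statement's English description precedes it below -/
import Mathlib

section
/- Let X be a real Hilbert space, B : X × X → ℝ a bilinear form that is coercive with constant α > 0, i.e. B(v, v) ≥ α‖v‖² for all v ∈ X. Let W be a closed subspace of X, V a closed subspace of W, and F : X → ℝ a continuous linear functional. Suppose Q ∈ W satisfies B(Q, w) = F(w) for all w ∈ W, Q_RB ∈ V satisfies B(Q_RB, v) = F(v) for all v ∈ V, and r ∈ W satisfies ⟨r, w⟩ = B(Q_RB, w) − F(w) for all w ∈ W. Then the energy norm of the reduced-basis error is controlled by the residual: B(Q − Q_RB, Q − Q_RB)^{1/2} ≤ α^{−1/2} ‖r‖. -/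
open scoped RealInnerProductSpace

/-- The energy norm of the reduced-basis error is controlled by the norm of the Riesz
representative of the residual: `B(Q - Q_RB, Q - Q_RB)^{1/2} ≤ α^{-1/2} ‖r‖`. -/
theorem stmt_1
    {X : Type*} [NormedAddCommGroup X] [InnerProductSpace ℝ X] [CompleteSpace X]
    (B : X →ₗ[ℝ] X →ₗ[ℝ] ℝ)
    (α : ℝ) (hα : 0 < α) (hcoer : ∀ v : X, α * ‖v‖ ^ 2 ≤ B v v)
    (W V : Submodule ℝ X)
    (hWclosed : IsClosed (W : Set X)) (hVclosed : IsClosed (V : Set X))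
    (hVW : V ≤ W)
    (F : X →L[ℝ] ℝ)
    (Q : X) (hQW : Q ∈ W) (hQ : ∀ w ∈ W, B Q w = F w)
    (QRB : X) (hQRBV : QRB ∈ V) (hQRB : ∀ v ∈ V, B QRB v = F v)
    (r : X) (hrW : r ∈ W) (hr : ∀ w ∈ W, ⟪r, w⟫ = B QRB w - F w) :
    Real.sqrt (B (Q - QRB) (Q - QRB)) ≤ (Real.sqrt α)⁻¹ * ‖r‖ := by
  have heW : Q - QRB ∈ W := W.sub_mem hQW (hVW hQRBV)
  have h1 : B (Q - QRB) (Q - QRB) = -⟪r, Q - QRB⟫ := by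
    rw [hr _ heW, ← hQ _ heW, map_sub B, LinearMap.sub_apply]
    ring
  have h2 := hcoer (Q - QRB)
  have h3 : -⟪r, Q - QRB⟫ ≤ ‖r‖ * ‖Q - QRB‖ :=
    (neg_le_abs _).trans (abs_real_inner_le_norm _ _)
  rw [← h1] at h3
  generalize B (Q - QRB) (Q - QRB) = b at *
  have he : 0 ≤ ‖Q - QRB‖ := norm_nonneg _
  have hn : 0 ≤ ‖r‖ := norm_nonneg _
  generalize ‖Q - QRB‖ = e at *
  generalize ‖r‖ = n at *
  have h4 : α * e ≤ n := by
    rcases he.eq_or_lt with h | h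
    · rw [← h]; simpa using hn
    · refine le_of_mul_le_mul_right ?_ h
      nlinarith
  have h5 : α * b ≤ n ^ 2 := by
    nlinarith [mul_le_mul_of_nonneg_left h3 hα.le, mul_le_mul_of_nonneg_left h4 hn]
  have hs : 0 < Real.sqrt α := Real.sqrt_pos.mpr hα
  rw [inv_mul_eq_div, le_div_iff₀ hs, mul_comm, ← Real.sqrt_mul hα.le]
  exact Real.sqrt_le_iff.mpr ⟨hn, h5⟩
end

section
/- Let X be a real Hilbert space, B : X × X → ℝ a bilinear form that is coercive with constant α > 0 (B(v,v) ≥ α‖v‖² for all v ∈ X) and bounded with constant β (|B(v,w)| ≤ β‖v‖‖w‖ for all v, w ∈ X). Let W be a closed subspace of X, V a closed subspace of W, and F : X → ℝ a continuous linear functional. Suppose Q ∈ W satisfies B(Q, w) = F(w) for all w ∈ W, Q_RB ∈ V satisfies B(Q_RB, v) = F(v) for all v ∈ V, and r ∈ W satisfies ⟨r, w⟩ = B(Q_RB, w) − F(w) for all w ∈ W. Then the residual-based error indicator Δ := α^{−1}‖r‖ is both reliable and efficient: ‖Q − Q_RB‖ ≤ α^{−1}‖r‖ and α^{−1}‖r‖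 ≤ (β/α)‖Q − Q_RB‖. -/
open scoped RealInnerProductSpace

/-- Reliability and efficiency of the residual-based error indicator `Δ := α⁻¹ ‖r‖`:
`‖Q − Q_RB‖ ≤ α⁻¹‖r‖` and `α⁻¹‖r‖ ≤ (β/α)‖Q − Q_RB‖`. -/
theorem stmt_2
    {X : Type*} [NormedAddCommGroup X] [InnerProductSpace ℝ X] [CompleteSpace X]
    (B : X →ₗ[ℝ] X →ₗ[ℝ] ℝ)
    (α : ℝ) (hα : 0 < α) (hcoer : ∀ v : X, α * ‖v‖ ^ 2 ≤ B v v)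
    (β : ℝ) (hbdd : ∀ v w : X, |B v w| ≤ β * ‖v‖ * ‖w‖)
    (W V : Submodule ℝ X)
    (hWclosed : IsClosed (W : Set X)) (hVclosed : IsClosed (V : Set X))
    (hVW : V ≤ W)
    (F : X →L[ℝ] ℝ)
    (Q : X) (hQW : Q ∈ W) (hQ : ∀ w ∈ W, B Q w = F w)
    (QRB : X) (hQRBV : QRB ∈ V) (hQRB : ∀ v ∈ V, B QRB v = F v)
    (r : X) (hrW : r ∈ W) (hr : ∀ w ∈ W, ⟪r, w⟫ = B QRB w - F w) :
    ‖Q - QRB‖ ≤ α⁻¹ * ‖r‖ ∧ α⁻¹ * ‖r‖ ≤ (β / α) * ‖Q - QRB‖ := by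
  have hes : Q - QRB ∈ W := W.sub_mem hQW (hVW hQRBV)
  have key : ∀ w ∈ W, ⟪r, w⟫ = - B (Q - QRB) w := by
    intro w hw
    rw [hr w hw, ← hQ w hw, map_sub, LinearMap.sub_apply]
    ring
  generalize Q - QRB = e at hes key ⊢
  have h1 : α * ‖e‖ ≤ ‖r‖ := by
    rcases (norm_nonneg e).eq_or_lt with h | h
    · rw [← h, mul_zero]
      exact norm_nonneg r
    · have a := hcoer e
      have b := key e hes
      have c := neg_le_of_abs_le (abs_real_inner_le_norm r e)
      refine le_of_mul_le_mul_right ?_ h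
      nlinarith
  have h2 : ‖r‖ ≤ β * ‖e‖ := by
    rcases (norm_nonneg r).eq_or_lt with h | h
    · rw [← h]
      rcases (norm_nonneg e).eq_or_lt with h' | h'
      · rw [← h', mul_zero]
      · exact nonneg_of_mul_nonneg_left ((abs_nonneg _).trans (hbdd e e)) h'
    · have a := key r hrW
      rw [real_inner_self_eq_norm_sq] at a
      have b := neg_le_of_abs_le (hbdd e r)
      refine le_of_mul_le_mul_right ?_ h
      nlinarith
  constructor
  · rw [inv_mul_eq_div, le_div_iff₀ hα]
    linarith
  · rw [inv_mul_eq_div, div_mul_eq_mul_div]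
    exact div_le_div_of_nonneg_right h2 hα.le
end

section
/- Let H be a real Hilbert space and F ⊆ H a nonempty compact set. Let (f_m)_{m ≥ 0} be a sequence in F, set V_n := span{f_0, …, f_{n−1}} (with V_0 = {0}), and define σ_n(F) := sup_{f ∈ F} dist(f, V_n). Define the Kolmogorov n-width d_n(F) := inf { sup_{f ∈ F} dist(f, Y) : Y is a subspace of H with dim Y ≤ n }. Suppose the sequence is weak greedy with parameter γ ∈ (0, 1], i.e. dist(f_n, V_n) ≥ γ · σ_n(F) for every n ≥ 0. Then for every n ≥ 0, σ_n(F) ≤ (1 + γ^{−1})^{n+1} (n + 1) d_n(F). -/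
/-- The space spanned by the first `n` greedily selected elements. -/
noncomputable def greedySpace {H : Type*} [NormedAddCommGroup H] [InnerProductSpace ℝ H]
    (f : ℕ → H) (n : ℕ) : Submodule ℝ H :=
  Submodule.span ℝ (f '' Set.Iio n)

/-- The worst-case error `σ_n(F)` of the `n`-th greedy space. -/
noncomputable def greedyError {H : Type*} [NormedAddCommGroup H] [InnerProductSpace ℝ H]
    (F : Set H) (f : ℕ → H) (n : ℕ) : ℝ :=
  ⨆ g : F, Metric.infDist (g : H) (greedySpace f n : Set H)

/-- The Kolmogorov `n`-width `d_n(F)` of a set `F` in `H`. -/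
noncomputable def kolmogorovWidth {H : Type*} [NormedAddCommGroup H] [InnerProductSpace ℝ H]
    (F : Set H) (n : ℕ) : ℝ :=
  sInf { r : ℝ | ∃ Y : Submodule ℝ H, FiniteDimensional ℝ Y ∧ Module.finrank ℝ Y ≤ n ∧
    r = ⨆ g : F, Metric.infDist (g : H) (Y : Set H) }

/-- If `u` is orthogonal to `V`, then the inner product with `u` is controlled by the distance. -/
lemma abs_inner_le_infDist_mul {H : Type*} [NormedAddCommGroup H] [InnerProductSpace ℝ H]
    (V : Submodule ℝ H) (u g : H) (hu : u ∈ Vᗮ) :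
    |inner ℝ g u| ≤ Metric.infDist g (V : Set H) * ‖u‖ := by
  by_cases h0 : u = 0
  · simp [h0]
  have hpos : 0 < ‖u‖ := norm_pos_iff.mpr h0
  rw [← div_le_iff₀ hpos]
  refine (Metric.le_infDist ⟨0, V.zero_mem⟩).2 ?_
  intro y hy
  rw [div_le_iff₀ hpos, dist_eq_norm]
  have h1 : inner ℝ g u = inner ℝ (g - y) u := by
    rw [inner_sub_left, (Submodule.mem_orthogonal V u).1 hu y hy, sub_zero]
  rw [h1]
  exact abs_real_inner_le_norm _ _

lemma bddAbove_infDist {H : Type*} [NormedAddCommGroup H] [InnerProductSpace ℝ H]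
    (F : Set H) (hF : IsCompact F) (V : Submodule ℝ H) :
    BddAbove (Set.range fun g : F => Metric.infDist (g : H) (V : Set H)) := by
  obtain ⟨C, hC⟩ := hF.isBounded.exists_norm_le
  refine ⟨C, ?_⟩
  rintro _ ⟨g, rfl⟩
  refine (Metric.infDist_le_dist_of_mem V.zero_mem).trans ?_
  rw [dist_zero_right]
  exact hC g g.2

/-- A discrete Gronwall inequality. -/
lemma gronwall_aux (a q D : ℝ) (ha : 0 ≤ a) (hq : q = 1 + a) (n : ℕ) (X : ℕ → ℝ)
    (h : ∀ i ≤ n, X i ≤ D + a * ∑ j ∈ Finset.range i, X j) :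
    ∀ i ≤ n, X i ≤ D * q ^ i := by
  intro i
  induction i using Nat.strong_induction_on with
  | _ i ih =>
    intro hi
    have h1 : ∑ j ∈ Finset.range i, X j ≤ ∑ j ∈ Finset.range i, D * q ^ j :=
      Finset.sum_le_sum fun j hj => by
        have := Finset.mem_range.1 hj
        exact ih j this (by omega)
    have h2 : (∑ j ∈ Finset.range i, q ^ j) * (q - 1) = q ^ i - 1 := geom_sum_mul q i
    rw [← Finset.mul_sum] at h1
    have h3 := mul_le_mul_of_nonneg_left h1 ha
    have h4 := h i hi
    have h5 : q - 1 = a := by linarith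
    rw [h5] at h2
    have : a * (D * ∑ j ∈ Finset.range i, q ^ j) = D * (q ^ i - 1) := by rw [← h2]; ring
    linarith

lemma exists_coeff {H : Type*} [NormedAddCommGroup H] [InnerProductSpace ℝ H]
    (Y : Submodule ℝ H) [FiniteDimensional ℝ Y] (n : ℕ) (hY : Module.finrank ℝ Y ≤ n)
    (r : ℕ → H) :
    ∃ c : ℕ → ℝ, (∃ i ≤ n, c i ≠ 0) ∧ ∑ i ∈ Finset.range (n + 1), c i • r i ∈ Yᗮ := by
  have hdep : ¬ LinearIndependent ℝ (fun i : Fin (n + 1) => Y.orthogonalProjectionOnto (r i)) := by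
    intro h
    have := h.fintype_card_le_finrank
    simp at this
    omega
  obtain ⟨g, hg, i, hi⟩ := Fintype.not_linearIndependent_iff.1 hdep
  refine ⟨fun k => if h : k < n + 1 then g ⟨k, h⟩ else 0, ⟨i, by omega, by beta_reduce; rw [dif_pos i.2]; exact hi⟩, ?_⟩
  rw [← Submodule.orthogonalProjectionOnto_eq_zero_iff, map_sum, Finset.sum_range, ← hg]
  refine Finset.sum_congr rfl fun k _ => ?_
  beta_reduce
  rw [dif_pos k.2, map_smul]

lemma greedy_main {H : Type*} [NormedAddCommGroup H] [InnerProductSpace ℝ H]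
    (F : Set H) (hFcompact : IsCompact F)
    (f : ℕ → H) (hfF : ∀ m, f m ∈ F)
    (γ : ℝ) (hγ0 : 0 < γ)
    (hgreedy : ∀ n, γ * greedyError F f n ≤ Metric.infDist (f n) (greedySpace f n : Set H))
    (n : ℕ) (Y : Submodule ℝ H) [FiniteDimensional ℝ Y] (hY : Module.finrank ℝ Y ≤ n) :
    greedyError F f n ≤ (1 + γ⁻¹) ^ (n + 1) * ⨆ g : F, Metric.infDist (g : H) (Y : Set H) := by
  set d : ℝ := ⨆ g : F, Metric.infDist (g : H) (Y : Set H) with hd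
  have hd0 : 0 ≤ d := Real.iSup_nonneg fun _ => Metric.infDist_nonneg
  have hq0 : 0 < 1 + γ⁻¹ := by positivity
  have hdist : ∀ m, Metric.infDist (f m) (Y : Set H) ≤ d := fun m =>
    le_ciSup (bddAbove_infDist F hFcompact Y) (⟨f m, hfF m⟩ : F)
  have hsig : ∀ m j, Metric.infDist (f m) (greedySpace f j : Set H) ≤ greedyError F f j :=
    fun m j => le_ciSup (bddAbove_infDist F hFcompact (greedySpace f j)) (⟨f m, hfF m⟩ : F)
  by_cases hs : greedyError F f n ≤ 0
  · exact hs.trans (by positivity)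
  push Not at hs
  have : Nonempty F := ⟨⟨f 0, hfF 0⟩⟩
  have hanti : ∀ j ≤ n, greedyError F f n ≤ greedyError F f j := by
    intro j hj
    refine ciSup_mono (bddAbove_infDist F hFcompact (greedySpace f j)) fun g => ?_
    refine Metric.infDist_le_infDist_of_subset ?_ ⟨0, (greedySpace f j).zero_mem⟩
    exact Submodule.span_mono (Set.image_mono (Set.Iio_subset_Iio hj))
  have hfin : ∀ j, FiniteDimensional ℝ (greedySpace f j) := fun j =>
    FiniteDimensional.span_of_finite ℝ ((Set.finite_Iio j).image f)
  -- residuals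
  have hr : ∀ j, ∃ r : H, r ∈ (greedySpace f j)ᗮ ∧ f j - r ∈ greedySpace f j := by
    intro j
    refine ⟨f j - (greedySpace f j).starProjection (f j),
      Submodule.sub_starProjection_mem_orthogonal _, ?_⟩
    simp
  choose r hr1 hr2 using hr
  have hrho : ∀ j, γ * greedyError F f j ≤ ‖r j‖ := by
    intro j
    refine (hgreedy j).trans ((Metric.infDist_le_dist_of_mem (hr2 j)).trans ?_)
    simp [dist_eq_norm]
  have hrho' : ∀ j ≤ n, γ * greedyError F f n ≤ ‖r j‖ := fun j hj =>
    (mul_le_mul_of_nonneg_left (hanti j hj) hγ0.le).trans (hrho j)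
  have hgs : 0 < γ * greedyError F f n := by positivity
  have hup : ∀ i j, i < j → inner ℝ (f i) (r j) = 0 := fun i j hij =>
    (Submodule.mem_orthogonal _ _).1 (hr1 j) (f i)
      (Submodule.subset_span ⟨i, hij, rfl⟩)
  have hdiag : ∀ i, inner ℝ (f i) (r i) = ‖r i‖ ^ 2 := by
    intro i
    have h := (Submodule.mem_orthogonal _ _).1 (hr1 i) _ (hr2 i)
    rw [inner_sub_left, real_inner_self_eq_norm_sq] at h
    linarith
  have hlow : ∀ i j, |inner ℝ (f i) (r j)| ≤ γ⁻¹ * ‖r j‖ ^ 2 := by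
    intro i j
    have h1 := abs_inner_le_infDist_mul _ _ (f i) (hr1 j)
    have h2 : Metric.infDist (f i) (greedySpace f j : Set H) ≤ γ⁻¹ * ‖r j‖ := by
      refine (hsig i j).trans ?_
      rw [le_inv_mul_iff₀ hγ0]
      exact hrho j
    calc _ ≤ _ := h1
      _ ≤ γ⁻¹ * ‖r j‖ * ‖r j‖ := by gcongr
      _ = _ := by ring
  obtain ⟨c, ⟨i0, hi0, hci0⟩, hu⟩ := exists_coeff Y n hY r
  set u := ∑ i ∈ Finset.range (n + 1), c i • r i with hudef
  have hinner : ∀ i ≤ n, inner ℝ (f i) u =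
      ∑ j ∈ Finset.range i, c j * inner ℝ (f i) (r j) + c i * ‖r i‖ ^ 2 := by
    intro i hi
    rw [hudef, inner_sum, ← hdiag, ← Finset.sum_range_succ (fun j => c j * inner ℝ (f i) (r j))]
    simp only [inner_smul_right]
    symm
    refine Finset.sum_subset (Finset.range_mono (by omega)) fun j _ hj => ?_
    rw [hup i j (by simp at hj; omega), mul_zero]
  have hX := gronwall_aux γ⁻¹ (1 + γ⁻¹) (d * ‖u‖) (by positivity) rfl n
    (fun j => |c j| * ‖r j‖ ^ 2) (by
      intro i hi
      have h1 : |inner ℝ (f i) u| ≤ d * ‖u‖ :=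
        (abs_inner_le_infDist_mul Y u (f i) hu).trans (by gcongr; exact hdist i)
      have h2 : |∑ j ∈ Finset.range i, c j * inner ℝ (f i) (r j)| ≤
          γ⁻¹ * ∑ j ∈ Finset.range i, |c j| * ‖r j‖ ^ 2 := by
        rw [Finset.mul_sum]
        refine (Finset.abs_sum_le_sum_abs _ _).trans (Finset.sum_le_sum fun j _ => ?_)
        rw [abs_mul]
        calc _ ≤ |c j| * (γ⁻¹ * ‖r j‖ ^ 2) := by gcongr; exact hlow i j
          _ = _ := by ring
      have h3 : |c i| * ‖r i‖ ^ 2 = |inner ℝ (f i) u -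
          ∑ j ∈ Finset.range i, c j * inner ℝ (f i) (r j)| := by
        rw [hinner i hi, add_sub_cancel_left, abs_mul, abs_of_nonneg (sq_nonneg ‖r i‖)]
      have h4 := abs_sub (inner ℝ (f i) u) (∑ j ∈ Finset.range i, c j * inner ℝ (f i) (r j))
      show |c i| * ‖r i‖ ^ 2 ≤ _
      linarith)
  have hupos : 0 < ‖u‖ := by
    by_contra hcon
    have h0 : ‖u‖ = 0 := le_antisymm (not_lt.1 hcon) (norm_nonneg _)
    have h1 := hX i0 hi0
    rw [h0] at h1
    have h2 : 0 < ‖r i0‖ := hgs.trans_le (hrho' i0 hi0)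
    have h3 : 0 < |c i0| * ‖r i0‖ ^ 2 := by positivity
    simp only [mul_zero, zero_mul] at h1
    linarith
  have hfinal : (γ * greedyError F f n) * ‖u‖ ≤
      ∑ i ∈ Finset.range (n + 1), d * ‖u‖ * (1 + γ⁻¹) ^ i := by
    calc (γ * greedyError F f n) * ‖u‖
        ≤ (γ * greedyError F f n) * ∑ i ∈ Finset.range (n + 1), |c i| * ‖r i‖ := by
          gcongr
          refine (norm_sum_le _ _).trans (le_of_eq ?_)
          simp [norm_smul]
      _ ≤ _ := by
          rw [Finset.mul_sum]
          refine Finset.sum_le_sum fun i hi => ?_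
          have hi' : i ≤ n := by simp at hi; omega
          refine le_trans ?_ (hX i hi')
          calc _ ≤ ‖r i‖ * (|c i| * ‖r i‖) := by gcongr; exact hrho' i hi'
            _ = _ := by ring
  rw [← Finset.mul_sum] at hfinal
  have hgeo := geom_sum_mul (1 + γ⁻¹) (n + 1)
  rw [add_sub_cancel_left, ← div_eq_mul_inv, div_eq_iff hγ0.ne'] at hgeo
  rw [hgeo] at hfinal
  have h1 : (greedyError F f n) * (γ * ‖u‖) ≤
      (((1 + γ⁻¹) ^ (n + 1) - 1) * d) * (γ * ‖u‖) := by linarith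
  have h2 := le_of_mul_le_mul_right h1 (by positivity)
  linarith

/-- Weak greedy algorithms in a Hilbert space: comparison of the greedy error with
the Kolmogorov width, `σ_n(F) ≤ (1 + γ⁻¹)^{n+1} (n+1) d_n(F)`. -/
theorem stmt_6
    {H : Type*} [NormedAddCommGroup H] [InnerProductSpace ℝ H] [CompleteSpace H]
    (F : Set H) (hFcompact : IsCompact F) (hFne : F.Nonempty)
    (f : ℕ → H) (hfF : ∀ m, f m ∈ F)
    (γ : ℝ) (hγ0 : 0 < γ) (hγ1 : γ ≤ 1)
    (hgreedy : ∀ n, γ * greedyError F f n ≤ Metric.infDist (f n) (greedySpace f n : Set H)) :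
    ∀ n, greedyError F f n
      ≤ (1 + γ⁻¹) ^ (n + 1) * (n + 1) * kolmogorovWidth F n := by
  intro n
  have hq0 : 0 < 1 + γ⁻¹ := by positivity
  have hK : 0 < (1 + γ⁻¹) ^ (n + 1) * ((n : ℝ) + 1) := by positivity
  rw [← div_le_iff₀' hK]
  refine le_csInf ⟨_, ⊥, inferInstance, by simp, rfl⟩ ?_
  rintro _ ⟨Y, hYf, hYn, rfl⟩
  rw [div_le_iff₀' hK]
  refine (greedy_main F hFcompact f hfF γ hγ0 hgreedy n Y hYn).trans ?_
  have hd0 : 0 ≤ ⨆ g : F, Metric.infDist (g : H) (Y : Set H) :=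
    Real.iSup_nonneg fun _ => Metric.infDist_nonneg
  refine mul_le_mul_of_nonneg_right ?_ hd0
  refine le_mul_of_one_le_right (by positivity) ?_
  have : (0 : ℝ) ≤ n := n.cast_nonneg
  linarith
end
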